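/- arXiv:1205.0343 — 3 statements merged into one kernel-verified Lean document; each statement's English description precedes it below -/
import Mathlib

section
/- Let k ≥ 2 and n_1, …, n_k be positive integers, let t be the number of indices i with n_i odd, and let I_1 = {i : n_i = 1}. If t is odd, t ≥ 3, and |I_1| ≥ (2k − t + 1)/2, then the signed domination number of the complete k-partite graph K_{n_1,…,n_k} equals 1. -/
open scoped Classical

/-- The signed domination number of a finite simple graph `G`: the minimum weight of a
function `f : V → {−1, 1}` such that `f(N[v]) ≥ 1` for every vertex `v`. -/
noncomputable def signedDomNum {V : Type*} [Fintype V] (G : SimpleGraph V) : ℤ :=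
  sInf {w : ℤ | ∃ f : V → ℤ, (∀ v, f v = 1 ∨ f v = -1) ∧
    (∀ v, 1 ≤ f v + ∑ u ∈ G.neighborFinset v, f u) ∧ w = ∑ v, f v}

/-!
A part with a single vertex `v` has `N[v] = V`, so every signed dominating function has weight at
least `1`. Weight `1` is attained by giving `1` to enough singleton parts, and weight `-1` or `-2`
(according to parity) to every other part: a closed neighborhood omits only vertices of its own
part, so discarding a part of negative weight outweighs a value `-1` at the vertex itself. With `p`
parts of the first kind the total weight is `2p + t - 2k`, which is `1` for `p = (2k - t + 1) / 2`;
the bound on the number of singletons says that there are that many to choose from.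
-/

section SignedDomination

variable {V : Type*} [Fintype V] {G : SimpleGraph V} {f : V → ℤ} {v : V}

/-- `f` is a signed dominating function of `G`: it takes the values `1` and `-1` only, and its sum
over every closed neighborhood, written as the vertex plus its open neighborhood, is positive. -/
def IsSignedDominating (G : SimpleGraph V) (f : V → ℤ) : Prop :=
  (∀ v, f v = 1 ∨ f v = -1) ∧ ∀ v, 1 ≤ f v + ∑ u ∈ G.neighborFinset v, f u

theorem IsSignedDominating.one_le_sum_of_isUniversal (hf : IsSignedDominating G f)
    (hv : G.IsUniversal v) : 1 ≤ ∑ u, f u := by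
  have h := hf.2 v
  rwa [(G.neighborFinset_eq_erase_univ v).mpr hv,
    Finset.add_sum_erase _ f (Finset.mem_univ v)] at h

theorem IsSignedDominating.signedDomNum_eq_one (hf : IsSignedDominating G f)
    (hsum : ∑ u, f u = 1) (hv : G.IsUniversal v) : signedDomNum G = 1 := by
  refine IsLeast.csInf_eq ⟨⟨f, hf.1, hf.2, hsum.symm⟩, ?_⟩
  rintro _ ⟨g, hg, hdom, rfl⟩
  exact IsSignedDominating.one_le_sum_of_isUniversal ⟨hg, hdom⟩ hv

end SignedDomination

section SignFunctions

variable {α : Type*} [Fintype α]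

theorem exists_sign_sum_eq_card_sub {a : ℕ} (ha : a ≤ Fintype.card α) :
    ∃ g : α → ℤ, (∀ x, g x = 1 ∨ g x = -1) ∧ ∑ x, g x = Fintype.card α - 2 * a := by
  obtain ⟨s, -, hs⟩ := Finset.exists_subset_card_eq (s := (Finset.univ : Finset α)) ha
  refine ⟨fun x => 1 - 2 * if x ∈ s then 1 else 0, fun x => ?_, ?_⟩
  · by_cases hx : x ∈ s <;> simp [hx]
  · simp [Finset.sum_sub_distrib, hs, mul_comm]

theorem exists_sign_sum_eq_ite_odd [Nonempty α] :
    ∃ g : α → ℤ, (∀ x, g x = 1 ∨ g x = -1) ∧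
      ∑ x, g x = if Odd (Fintype.card α) then -1 else -2 := by
  have hpos : 0 < Fintype.card α := Fintype.card_pos
  obtain ⟨g, hg, hsum⟩ :=
    exists_sign_sum_eq_card_sub (α := α) (a := Fintype.card α / 2 + 1) (by omega)
  refine ⟨g, hg, hsum.trans ?_⟩
  simp only [Nat.odd_iff]
  split_ifs <;> omega

end SignFunctions

section CompleteMultipartite

variable {ι : Type*} {V : ι → Type*}

theorem isUniversal_completeMultipartiteGraph_of_subsingleton {v : Σ i, V i}
    [Subsingleton (V v.1)] : (SimpleGraph.completeMultipartiteGraph V).IsUniversal v := by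
  obtain ⟨i, x⟩ := v
  rintro ⟨j, y⟩ hne (rfl : i = j)
  exact hne (congrArg _ (Subsingleton.elim x y))

variable [Fintype ι] [∀ i, Fintype (V i)]

theorem sum_neighborFinset_completeMultipartiteGraph {M : Type*} [AddCommGroup M]
    (f : (Σ i, V i) → M) (v : Σ i, V i)
    [Fintype ((SimpleGraph.completeMultipartiteGraph V).neighborSet v)] :
    ∑ u ∈ (SimpleGraph.completeMultipartiteGraph V).neighborFinset v, f u
      = ∑ u, f u - ∑ x, f ⟨v.1, x⟩ := by
  have hnbr : (SimpleGraph.completeMultipartiteGraph V).neighborFinset v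
      = (Finset.univ.erase v.1).sigma fun _ => Finset.univ := by
    ext u
    simp [eq_comm]
  rw [hnbr, Finset.sum_sigma, Fintype.sum_sigma, Finset.sum_erase_eq_sub (Finset.mem_univ _)]

theorem isSignedDominating_completeMultipartiteGraph {f : (Σ i, V i) → ℤ}
    (hf : ∀ v, f v = 1 ∨ f v = -1) (hsum : 1 ≤ ∑ v, f v)
    (hpart : ∀ i, Subsingleton (V i) ∨ ∑ x, f ⟨i, x⟩ < 0) :
    IsSignedDominating (SimpleGraph.completeMultipartiteGraph V) f := by
  refine ⟨hf, fun ⟨i, x⟩ => ?_⟩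
  rw [sum_neighborFinset_completeMultipartiteGraph]
  rcases hpart i with _ | hneg
  · rw [Fintype.sum_subsingleton _ x]
    linarith
  · have := hf ⟨i, x⟩
    dsimp only
    omega

variable [∀ i, Nonempty (V i)]

theorem exists_isSignedDominating_sum_eq_one {P : Finset ι}
    (hP : ∀ i ∈ P, Fintype.card (V i) = 1)
    (hcard : 2 * P.card + (Finset.univ.filter fun i => Odd (Fintype.card (V i))).card
      = 2 * Fintype.card ι + 1) :
    ∃ f, IsSignedDominating (SimpleGraph.completeMultipartiteGraph V) f ∧ ∑ v, f v = 1 := by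
  have hsign (i : ι) : ∃ g : V i → ℤ, (∀ x, g x = 1 ∨ g x = -1) ∧ ∑ x, g x
      = 2 * (if i ∈ P then 1 else 0) + (if Odd (Fintype.card (V i)) then 1 else 0) - 2 := by
    by_cases hi : i ∈ P
    · exact ⟨1, by simp, by simp [hi, hP i hi]⟩
    · obtain ⟨g, hg, hsum⟩ := exists_sign_sum_eq_ite_odd (α := V i)
      exact ⟨g, hg, by rw [hsum]; split_ifs <;> rfl⟩
  choose g hg hgsum using hsign
  have hsum : ∑ v : Σ i, V i, g v.1 v.2 = 1 := by
    simp only [Fintype.sum_sigma, hgsum, Finset.sum_sub_distrib, Finset.sum_add_distrib,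
      ← Finset.mul_sum, Finset.sum_boole, Finset.filter_univ_mem, Finset.sum_const,
      Finset.card_univ, nsmul_eq_mul]
    omega
  refine ⟨fun v => g v.1 v.2, isSignedDominating_completeMultipartiteGraph
    (fun v => hg v.1 v.2) hsum.ge fun i => ?_, hsum⟩
  by_cases hi : i ∈ P
  · exact .inl (Fintype.card_le_one_iff_subsingleton.mp (hP i hi).le)
  · refine .inr ?_
    simp only [hgsum, hi, if_false]
    split_ifs <;> norm_num

theorem signedDomNum_eq_one_of_many_singletons_general
    (hodd : Odd (Finset.univ.filter fun i => Odd (Fintype.card (V i))).card)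
    (hI : 2 * Fintype.card ι + 1 ≤ 2 * (Finset.univ.filter fun i => Fintype.card (V i) = 1).card
      + (Finset.univ.filter fun i => Odd (Fintype.card (V i))).card) :
    signedDomNum (SimpleGraph.completeMultipartiteGraph V) = 1 := by
  have hle : (Finset.univ.filter fun i => Odd (Fintype.card (V i))).card ≤ Fintype.card ι :=
    Finset.card_le_univ _
  obtain ⟨r, hr⟩ := hodd
  obtain ⟨P, hPsub, hPcard⟩ := Finset.exists_subset_card_eq
    (s := Finset.univ.filter fun i => Fintype.card (V i) = 1) (n := Fintype.card ι - r) (by omega)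
  have hP : ∀ i ∈ P, Fintype.card (V i) = 1 := fun i hi => (Finset.mem_filter.mp (hPsub hi)).2
  obtain ⟨f, hf, hsum⟩ := exists_isSignedDominating_sum_eq_one hP (by omega)
  obtain ⟨i, hi⟩ : P.Nonempty := Finset.card_pos.mp (by omega)
  obtain ⟨x⟩ : Nonempty (V i) := inferInstance
  have : Subsingleton (V i) := Fintype.card_le_one_iff_subsingleton.mp (hP i hi).le
  exact hf.signedDomNum_eq_one (v := ⟨i, x⟩) hsum
    isUniversal_completeMultipartiteGraph_of_subsingleton

end CompleteMultipartite

theorem signedDomNum_eq_one_of_many_singletons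
    (k : ℕ) (hk : 2 ≤ k) (n : Fin k → ℕ) (hn : ∀ i, 0 < n i)
    (t : ℕ) (ht : t = (Finset.univ.filter fun i => Odd (n i)).card)
    (htodd : Odd t) (ht3 : 3 ≤ t)
    (hI : 2 * ((Finset.univ.filter fun i => n i = 1).card : ℤ) ≥ 2 * (k : ℤ) - (t : ℤ) + 1) :
    signedDomNum (SimpleGraph.completeMultipartiteGraph fun i : Fin k => Fin (n i)) = 1 := by
  have (i : Fin k) : Nonempty (Fin (n i)) := ⟨0, hn i⟩
  exact signedDomNum_eq_one_of_many_singletons_general (by simpa [← ht]) (by simp [← ht]; omega)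
end

section
/- Let n_1 be an odd integer with n_1 ≥ 5 and let n_2 be an even integer with n_2 ≥ 4. Then the signed domination number of the complete bipartite graph K_{n_1,n_2} equals 5. -/
open scoped Classical

/-!
A sign function on `n` points sums to `n` minus twice its number of negative values, so its sum has
the parity of `n`, and equals `n` when there is no negative value. In a complete bipartite graph a
negative vertex on one side forces the other side to sum to at least `2`, hence to at least `2` or
`3` according to the parity of its size. A side without negative vertices sums to its size, which is
at least `4` or `5`, while the other side still sums to at least `0` or `1`, so the same total lower
bound holds. It is attained by giving each side sum `2` or `3`.
-/

section SignFunction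

variable {ι : Type*} [Fintype ι]

lemma sum_eq_card_sub_two_mul_card_neg_one {g : ι → ℤ} (hg : ∀ i, g i = 1 ∨ g i = -1) :
    ∑ i, g i = Fintype.card ι - 2 * ({i | g i = -1} : Finset ι).card := by
  have value_eq (i : ι) : g i = 1 - 2 * if g i = -1 then 1 else 0 := by
    rcases hg i with hi | hi <;> simp [hi]
  rw [Finset.sum_congr rfl fun i _ => value_eq i, Finset.sum_sub_distrib, ← Finset.mul_sum,
    Finset.sum_boole]
  simp

lemma sum_modEq_card_of_sign {g : ι → ℤ} (hg : ∀ i, g i = 1 ∨ g i = -1) :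
    ∑ i, g i ≡ Fintype.card ι [ZMOD 2] := by
  rw [sum_eq_card_sub_two_mul_card_neg_one hg]
  exact (Int.modEq_sub_modulus_mul_iff.mpr rfl).symm

lemma add_card_mod_two_le_sum_of_sign {g : ι → ℤ} (hg : ∀ i, g i = 1 ∨ g i = -1) {k : ℤ}
    (hk : Even k) (hle : k ≤ ∑ i, g i) : k + (Fintype.card ι : ℤ) % 2 ≤ ∑ i, g i := by
  have parity : (∑ i, g i) % 2 = (Fintype.card ι : ℤ) % 2 := sum_modEq_card_of_sign hg
  have hk_mod : k % 2 = 0 := Int.even_iff.mp hk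
  omega

lemma exists_sign_sum_eq_card_sub_two_mul {m : ℕ} (hm : m ≤ Fintype.card ι) :
    ∃ g : ι → ℤ, (∀ i, g i = 1 ∨ g i = -1) ∧ ∑ i, g i = Fintype.card ι - 2 * m := by
  obtain ⟨s, -, rfl⟩ := Finset.exists_subset_card_eq (s := (Finset.univ : Finset ι)) hm
  let g (i : ι) : ℤ := if i ∈ s then -1 else 1
  have hg (i : ι) : g i = 1 ∨ g i = -1 := (ite_eq_or_eq _ _ _).symm
  refine ⟨g, hg, ?_⟩
  have negatives_eq : ({i | g i = -1} : Finset ι) = s := by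
    ext i
    by_cases hi : i ∈ s <;> simp [g, hi]
  rw [sum_eq_card_sub_two_mul_card_neg_one hg, negatives_eq]

lemma exists_sign_sum_eq_two_add_card_mod_two (hι : 2 ≤ Fintype.card ι) :
    ∃ g : ι → ℤ, (∀ i, g i = 1 ∨ g i = -1) ∧ ∑ i, g i = 2 + (Fintype.card ι : ℤ) % 2 := by
  obtain ⟨g, hg, hsum⟩ := exists_sign_sum_eq_card_sub_two_mul (ι := ι)
    (m := Fintype.card ι / 2 - 1) (by omega)
  exact ⟨g, hg, by omega⟩

lemma exists_eq_neg_one_or_sum_eq_card {g : ι → ℤ} (hg : ∀ i, g i = 1 ∨ g i = -1) :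
    (∃ i, g i = -1) ∨ ∑ i, g i = Fintype.card ι := by
  refine or_iff_not_imp_left.mpr fun no_neg => ?_
  simp [fun i => (hg i).resolve_right (not_exists.mp no_neg i)]

end SignFunction

section SignedDominating

variable {V : Type*} [Fintype V] {G : SimpleGraph V}

/-- Signed dominating functions: the `±1`-valued vertex labellings, encoded as integer-valued
functions, whose sum over every closed neighbourhood is at least `1`. -/
structure IsSignedDominating_s2 (G : SimpleGraph V) (f : V → ℤ) : Prop where
  sign : ∀ v, f v = 1 ∨ f v = -1
  one_le_sum : ∀ v, 1 ≤ f v + ∑ u ∈ G.neighborFinset v, f u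

lemma IsSignedDominating_s2.signedDomNum_eq {f : V → ℤ} (hf : IsSignedDominating_s2 G f)
    (hmin : ∀ g, IsSignedDominating_s2 G g → ∑ v, f v ≤ ∑ v, g v) :
    signedDomNum G = ∑ v, f v := by
  refine IsLeast.csInf_eq ⟨⟨f, hf.sign, hf.one_le_sum, rfl⟩, ?_⟩
  rintro _ ⟨g, hsign, hsum, rfl⟩
  exact hmin g ⟨hsign, hsum⟩

end SignedDominating

section CompleteBipartite

variable {α β : Type*} [Fintype α] [Fintype β]

lemma neighborFinset_completeBipartiteGraph_inl (a : α) :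
    (completeBipartiteGraph α β).neighborFinset (Sum.inl a) =
      Finset.univ.map Function.Embedding.inr := by
  ext (x | x) <;> simp

lemma neighborFinset_completeBipartiteGraph_inr (b : β) :
    (completeBipartiteGraph α β).neighborFinset (Sum.inr b) =
      Finset.univ.map Function.Embedding.inl := by
  ext (x | x) <;> simp

lemma isSignedDominating_completeBipartiteGraph_iff {f : α ⊕ β → ℤ} :
    IsSignedDominating_s2 (completeBipartiteGraph α β) f ↔
      (∀ v, f v = 1 ∨ f v = -1) ∧ (∀ a, 1 ≤ f (Sum.inl a) + ∑ b, f (Sum.inr b)) ∧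
        ∀ b, 1 ≤ f (Sum.inr b) + ∑ a, f (Sum.inl a) := by
  have closed_sums : (∀ v, 1 ≤ f v + ∑ u ∈ (completeBipartiteGraph α β).neighborFinset v, f u) ↔
      (∀ a, 1 ≤ f (Sum.inl a) + ∑ b, f (Sum.inr b)) ∧
        ∀ b, 1 ≤ f (Sum.inr b) + ∑ a, f (Sum.inl a) := by
    simp only [Sum.forall, neighborFinset_completeBipartiteGraph_inl,
      neighborFinset_completeBipartiteGraph_inr, Finset.sum_map, Function.Embedding.inl_apply,
      Function.Embedding.inr_apply]
  rw [← closed_sums]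
  exact ⟨fun h => ⟨h.sign, h.one_le_sum⟩, fun h => ⟨h.1, h.2⟩⟩

lemma exists_isSignedDominating_completeBipartiteGraph (hα : 2 ≤ Fintype.card α)
    (hβ : 2 ≤ Fintype.card β) :
    ∃ f, IsSignedDominating_s2 (completeBipartiteGraph α β) f ∧
      ∑ v, f v = 4 + (Fintype.card α : ℤ) % 2 + (Fintype.card β : ℤ) % 2 := by
  obtain ⟨g, hg, hgsum⟩ := exists_sign_sum_eq_two_add_card_mod_two hα
  obtain ⟨h, hh, hhsum⟩ := exists_sign_sum_eq_two_add_card_mod_two hβ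
  refine ⟨Sum.elim g h, isSignedDominating_completeBipartiteGraph_iff.mpr
    ⟨Sum.forall.mpr ⟨hg, hh⟩, fun a => ?_, fun b => ?_⟩, ?_⟩
  · simp only [Sum.elim_inl, Sum.elim_inr, hhsum]
    have := hg a
    omega
  · simp only [Sum.elim_inl, Sum.elim_inr, hgsum]
    have := hh b
    omega
  · simp only [Fintype.sum_sum_type, Sum.elim_inl, Sum.elim_inr, hgsum, hhsum]
    ring

lemma IsSignedDominating_s2.le_sum_completeBipartiteGraph {f : α ⊕ β → ℤ}
    (hf : IsSignedDominating_s2 (completeBipartiteGraph α β) f)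
    (hα : 4 ≤ Fintype.card α) (hβ : 4 ≤ Fintype.card β) :
    4 + (Fintype.card α : ℤ) % 2 + (Fintype.card β : ℤ) % 2 ≤ ∑ v, f v := by
  obtain ⟨sign, left, right⟩ := isSignedDominating_completeBipartiteGraph_iff.mp hf
  have left_bound {k : ℤ} (hk : Even k) := add_card_mod_two_le_sum_of_sign
    (fun a => sign (Sum.inl a)) hk
  have right_bound {k : ℤ} (hk : Even k) := add_card_mod_two_le_sum_of_sign
    (fun b => sign (Sum.inr b)) hk
  have nonneg_of_closed_sum {x s : ℤ} (hx : x = 1 ∨ x = -1) (hs : 1 ≤ x + s) : 0 ≤ s := by omega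
  obtain ⟨a₀⟩ : Nonempty α := Fintype.card_pos_iff.mp (by omega)
  obtain ⟨b₀⟩ : Nonempty β := Fintype.card_pos_iff.mp (by omega)
  have nonneg_left := nonneg_of_closed_sum (sign (Sum.inr b₀)) (right b₀)
  have nonneg_right := nonneg_of_closed_sum (sign (Sum.inl a₀)) (left a₀)
  rw [Fintype.sum_sum_type]
  rcases exists_eq_neg_one_or_sum_eq_card fun a => sign (Sum.inl a) with ⟨a, ha⟩ | all_left
  · rcases exists_eq_neg_one_or_sum_eq_card fun b => sign (Sum.inr b) with ⟨b, hb⟩ | all_right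
    · have two_le_left : 2 ≤ ∑ a, f (Sum.inl a) := by linarith [right b]
      have two_le_right : 2 ≤ ∑ b, f (Sum.inr b) := by linarith [left a]
      linarith [left_bound even_two two_le_left, right_bound even_two two_le_right]
    · have four_le_right : 4 ≤ ∑ b, f (Sum.inr b) := by omega
      linarith [left_bound Even.zero nonneg_left, right_bound (by decide) four_le_right]
  · have four_le_left : 4 ≤ ∑ a, f (Sum.inl a) := by omega
    linarith [left_bound (by decide) four_le_left, right_bound Even.zero nonneg_right]

theorem signedDomNum_completeBipartite_odd_even_general
    (hα : 4 ≤ Fintype.card α) (hβ : 4 ≤ Fintype.card β) :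
    signedDomNum (completeBipartiteGraph α β) =
      4 + (Fintype.card α : ℤ) % 2 + (Fintype.card β : ℤ) % 2 := by
  obtain ⟨f, hf, hsum⟩ := exists_isSignedDominating_completeBipartiteGraph
    (α := α) (β := β) (by omega) (by omega)
  rw [← hsum]
  exact hf.signedDomNum_eq fun g hg => hsum ▸ hg.le_sum_completeBipartiteGraph hα hβ

end CompleteBipartite

theorem signedDomNum_completeBipartite_odd_even
    (n₁ n₂ : ℕ) (h₁ : Odd n₁) (h₁' : 5 ≤ n₁) (h₂ : Even n₂) (h₂' : 4 ≤ n₂) :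
    signedDomNum (completeBipartiteGraph (Fin n₁) (Fin n₂)) = 5 := by
  have odd_mod : (n₁ : ℤ) % 2 = 1 := mod_cast Nat.odd_iff.mp h₁
  have even_mod : (n₂ : ℤ) % 2 = 0 := mod_cast Nat.even_iff.mp h₂
  rw [signedDomNum_completeBipartite_odd_even_general (by rw [Fintype.card_fin]; omega)
    (by rwa [Fintype.card_fin]), Fintype.card_fin, Fintype.card_fin, odd_mod, even_mod]
  norm_num
end

section
/- Let k ≥ 2 and n_1, …, n_k be positive integers. If n_i = 1 for some i ∈ {1, …, k}, then the minus domination number of the complete k-partite graph K_{n_1,…,n_k} equals 1; otherwise (i.e., if n_i ≥ 2 for all i) it equals 2. -/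
open scoped Classical

/-- The minus domination number of a finite simple graph `G`: the minimum weight of a
function `f : V → {−1, 0, 1}` such that `f(N[v]) ≥ 1` for every vertex `v`. -/
noncomputable def minusDomNum {V : Type*} [Fintype V] (G : SimpleGraph V) : ℤ :=
  sInf {w : ℤ | ∃ f : V → ℤ, (∀ v, f v = -1 ∨ f v = 0 ∨ f v = 1) ∧
    (∀ v, 1 ≤ f v + ∑ u ∈ G.neighborFinset v, f u) ∧ w = ∑ v, f v}

/-!
A universal vertex forces weight at least `1`, since its closed neighborhood sum is the whole
weight. In a complete multipartite graph the closed neighborhood sum at `v` is the weight plus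
`f v` minus the sum of the part of `v`. Hence some part has positive sum: otherwise the condition
at each `v` would give `f v ≥ 1`. Averaging the condition over a part with positive sum and at
least two vertices gives weight greater than `1`. Indicator functions of dominating sets attain
both bounds.
-/

open SimpleGraph

section DominatingSet

variable {V : Type*}

/-- `S` is a dominating set of `G`: every vertex lies in `S` or has a neighbor in `S`. Indicator
functions of such sets are the minus dominating functions used for upper bounds. -/
def IsDominatingSet (G : SimpleGraph V) (S : Finset V) : Prop :=
  ∀ v, v ∈ S ∨ ∃ u ∈ S, G.Adj v u

theorem isDominatingSet_singleton {G : SimpleGraph V} {v : V} (hv : G.IsUniversal v) :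
    IsDominatingSet G {v} := by
  intro u
  by_cases huv : v = u
  · exact .inl (by simp [huv])
  · exact .inr ⟨v, by simp, (hv huv).symm⟩

theorem isDominatingSet_pair_of_adj {ι : Type*} {V : ι → Type*} {u w : Σ i, V i}
    (huw : (completeMultipartiteGraph V).Adj u w) :
    IsDominatingSet (completeMultipartiteGraph V) {u, w} := by
  intro v
  right
  by_cases hvu : v.1 = u.1
  · exact ⟨w, by simp, fun hvw => huw (hvu.symm.trans hvw)⟩
  · exact ⟨u, by simp, hvu⟩

end DominatingSet

section ClosedNbhdSum

variable {V : Type*} [Fintype V]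

/-- The sum `f(N[v])` of `f` over the closed neighborhood of `v`, which enters the condition
`f(N[v]) ≥ 1` on a minus dominating function. -/
noncomputable def closedNbhdSum {M : Type*} [AddCommMonoid M] (G : SimpleGraph V) (f : V → M)
    (v : V) : M :=
  ∑ u ∈ insert v (G.neighborFinset v), f u

theorem closedNbhdSum_eq_add {M : Type*} [AddCommMonoid M] (G : SimpleGraph V) (f : V → M)
    (v : V) : closedNbhdSum G f v = f v + ∑ u ∈ G.neighborFinset v, f u :=
  Finset.sum_insert (G.notMem_neighborFinset_self v)

theorem closedNbhdSum_eq_sum_of_isUniversal {M : Type*} [AddCommMonoid M] {G : SimpleGraph V}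
    {v : V} (hv : G.IsUniversal v) (f : V → M) : closedNbhdSum G f v = ∑ u, f u := by
  rw [closedNbhdSum, (G.insert_neighborFinset_eq_univ v).mpr hv]

theorem IsDominatingSet.one_le_closedNbhdSum_indicator {G : SimpleGraph V} {S : Finset V}
    (hS : IsDominatingSet G S) (v : V) :
    1 ≤ closedNbhdSum G (fun u => if u ∈ S then (1 : ℤ) else 0) v := by
  obtain ⟨u, huv, huS⟩ : ∃ u ∈ insert v (G.neighborFinset v), u ∈ S := by
    rcases hS v with hv | ⟨u, huS, hvu⟩
    · exact ⟨v, by simp, hv⟩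
    · exact ⟨u, by simp [hvu], huS⟩
  calc (1 : ℤ) = if u ∈ S then 1 else 0 := (if_pos huS).symm
    _ ≤ closedNbhdSum G (fun u => if u ∈ S then (1 : ℤ) else 0) v :=
      Finset.single_le_sum (f := fun u => if u ∈ S then (1 : ℤ) else 0)
        (fun _ _ => by split_ifs <;> norm_num) huv

theorem IsDominatingSet.minusDomNum_eq_card {G : SimpleGraph V} {S : Finset V}
    (hS : IsDominatingSet G S)
    (hle : ∀ f : V → ℤ, (∀ v, 1 ≤ closedNbhdSum G f v) → (S.card : ℤ) ≤ ∑ v, f v) :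
    minusDomNum G = S.card := by
  simp only [closedNbhdSum_eq_add] at hle
  refine IsLeast.csInf_eq ⟨⟨fun v => if v ∈ S then 1 else 0, fun v => ?_, fun v => ?_, ?_⟩, ?_⟩
  · dsimp only
    split_ifs <;> simp
  · exact (hS.one_le_closedNbhdSum_indicator v).trans_eq (closedNbhdSum_eq_add _ _ _)
  · simp
  · rintro w ⟨f, -, hf, rfl⟩
    exact hle f hf

theorem minusDomNum_eq_one_of_isUniversal {G : SimpleGraph V} {v : V} (hv : G.IsUniversal v) :
    minusDomNum G = 1 := by
  simpa using (isDominatingSet_singleton hv).minusDomNum_eq_card fun f hf => by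
    simpa [closedNbhdSum_eq_sum_of_isUniversal hv] using hf v

end ClosedNbhdSum

section CompleteMultipartite

variable {ι : Type*} {V : ι → Type*}

theorem isUniversal_completeMultipartiteGraph {i : ι} [Subsingleton (V i)] (a : V i) :
    (completeMultipartiteGraph V).IsUniversal ⟨i, a⟩ := by
  rintro ⟨j, b⟩ hne rfl
  exact hne (by rw [Subsingleton.elim a b])

variable [Fintype ι] [∀ i, Fintype (V i)]

theorem closedNbhdSum_completeMultipartiteGraph {M : Type*} [AddCommGroup M]
    (f : (Σ i, V i) → M) (v : Σ i, V i) :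
    closedNbhdSum (completeMultipartiteGraph V) f v = f v + (∑ u, f u - ∑ a, f ⟨v.1, a⟩) := by
  have hpart : ∑ u : Σ i, V i with u.1 = v.1, f u = ∑ a, f ⟨v.1, a⟩ := by
    rw [Finset.sum_filter, Fintype.sum_sigma,
      Fintype.sum_eq_single v.1 fun i hi => by simp [hi]]
    simp
  have hnbr : closedNbhdSum (completeMultipartiteGraph V) f v =
      f v + ∑ u : Σ i, V i with ¬ u.1 = v.1, f u := by
    rw [closedNbhdSum_eq_add]
    congr 2
    ext u
    simp [eq_comm]
  rw [hnbr, ← hpart,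
    ← Finset.sum_filter_add_sum_filter_not Finset.univ (fun u : Σ i, V i => u.1 = v.1) f,
    add_sub_cancel_left]

theorem exists_sum_part_pos [Nonempty (Σ i, V i)] {f : (Σ i, V i) → ℤ}
    (hf : ∀ v, 1 ≤ closedNbhdSum (completeMultipartiteGraph V) f v) :
    ∃ i, 0 < ∑ a, f ⟨i, a⟩ := by
  by_contra! hpart
  have hpos : ∀ v, 0 < f v := fun v => by
    have hweight : ∑ u, f u ≤ ∑ a, f ⟨v.1, a⟩ := by
      rw [Fintype.sum_sigma, ← Finset.add_sum_erase _ _ (Finset.mem_univ v.1)]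
      exact add_le_of_nonpos_right (Finset.sum_nonpos fun i _ => hpart i)
    have := hf v
    rw [closedNbhdSum_completeMultipartiteGraph] at this
    linarith
  obtain ⟨i, a⟩ := ‹Nonempty (Σ i, V i)›
  exact (hpart i).not_gt (Finset.sum_pos (fun a _ => hpos ⟨i, a⟩) ⟨a, Finset.mem_univ a⟩)

theorem card_part_mul_le_sum_part {f : (Σ i, V i) → ℤ}
    (hf : ∀ v, 1 ≤ closedNbhdSum (completeMultipartiteGraph V) f v) (i : ι) :
    Fintype.card (V i) * (1 + ∑ a, f ⟨i, a⟩ - ∑ v, f v) ≤ ∑ a, f ⟨i, a⟩ := by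
  rw [← nsmul_eq_mul, Fintype.card]
  refine Finset.card_nsmul_le_sum _ _ _ fun a _ => ?_
  have := hf ⟨i, a⟩
  rw [closedNbhdSum_completeMultipartiteGraph] at this
  linarith

theorem two_le_sum_of_one_le_closedNbhdSum [Nonempty (Σ i, V i)]
    (hV : ∀ i, Fintype.card (V i) ≠ 1) {f : (Σ i, V i) → ℤ}
    (hf : ∀ v, 1 ≤ closedNbhdSum (completeMultipartiteGraph V) f v) : 2 ≤ ∑ v, f v := by
  obtain ⟨i, hi⟩ := exists_sum_part_pos hf
  have hcard : (2 : ℤ) ≤ Fintype.card (V i) := by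
    have : Fintype.card (V i) ≠ 0 := fun h => by
      have := Fintype.card_eq_zero_iff.mp h
      simp at hi
    have := hV i
    omega
  have hweight : 0 < Fintype.card (V i) * (∑ v, f v - 1) :=
    calc 0 < (Fintype.card (V i) - 1) * ∑ a, f ⟨i, a⟩ := mul_pos (by linarith) hi
      _ ≤ Fintype.card (V i) * (∑ v, f v - 1) := by linarith [card_part_mul_le_sum_part hf i]
  have := pos_of_mul_pos_right hweight (by positivity)
  linarith

theorem minusDomNum_completeMultipartiteGraph_eq_one {i : ι} (hi : Fintype.card (V i) = 1) :
    minusDomNum (completeMultipartiteGraph V) = 1 := by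
  obtain ⟨a, ha⟩ := Fintype.card_eq_one_iff.mp hi
  have : Subsingleton (V i) := subsingleton_of_forall_eq a ha
  exact minusDomNum_eq_one_of_isUniversal (isUniversal_completeMultipartiteGraph a)

theorem minusDomNum_completeMultipartiteGraph_eq_two (hV : ∀ i, Fintype.card (V i) ≠ 1)
    (hG : completeMultipartiteGraph V ≠ ⊥) : minusDomNum (completeMultipartiteGraph V) = 2 := by
  obtain ⟨u, w, huw⟩ := ne_bot_iff_exists_adj.mp hG
  have : Nonempty (Σ i, V i) := ⟨u⟩
  have hcard : ({u, w} : Finset (Σ i, V i)).card = 2 := Finset.card_pair huw.ne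
  rw [(isDominatingSet_pair_of_adj huw).minusDomNum_eq_card, hcard, Nat.cast_two]
  intro f hf
  rw [hcard]
  exact two_le_sum_of_one_le_closedNbhdSum hV hf

theorem minusDomNum_completeMultipartite_general :
    ((∃ i, Fintype.card (V i) = 1) → minusDomNum (completeMultipartiteGraph V) = 1) ∧
    ((∀ i, Fintype.card (V i) ≠ 1) → completeMultipartiteGraph V ≠ ⊥ →
      minusDomNum (completeMultipartiteGraph V) = 2) :=
  ⟨fun ⟨_, hi⟩ => minusDomNum_completeMultipartiteGraph_eq_one hi,
    minusDomNum_completeMultipartiteGraph_eq_two⟩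

end CompleteMultipartite

theorem minusDomNum_completeMultipartite
    (k : ℕ) (hk : 2 ≤ k) (n : Fin k → ℕ) (hn : ∀ i, 0 < n i) :
    ((∃ i, n i = 1) →
      minusDomNum (SimpleGraph.completeMultipartiteGraph fun i : Fin k => Fin (n i)) = 1) ∧
    ((∀ i, n i ≠ 1) →
      minusDomNum (SimpleGraph.completeMultipartiteGraph fun i : Fin k => Fin (n i)) = 2) := by
  have hG : SimpleGraph.completeMultipartiteGraph (fun i : Fin k => Fin (n i)) ≠ ⊥ :=
    ne_bot_iff_exists_adj.mpr
      ⟨⟨⟨0, by omega⟩, ⟨0, hn _⟩⟩, ⟨⟨1, by omega⟩, ⟨0, hn _⟩⟩, by simp⟩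
  simpa [hG] using minusDomNum_completeMultipartite_general (V := fun i : Fin k => Fin (n i))
end
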